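/- arXiv:2603.13535 — 3 statements merged into one kernel-verified Lean document; each statement's English description precedes it below -/
import Mathlib

section
/- Let (i,j) ∈ E be an edge of a finite connected simple graph G. For every β ∈ [0,1], c_OR(i,j) ≥ (1−β)·c_OR-0(i,j) − (|α_i − β| + |α_j − β|). -/
namespace Curv

open Finset

noncomputable section

variable {V : Type*} [Fintype V] [DecidableEq V] (G : SimpleGraph V) [DecidableRel G.Adj]

/-- `μ` is a probability distribution on the (finite) vertex set. -/
def IsProb (μ : V → ℝ) : Prop := (∀ x, 0 ≤ μ x) ∧ ∑ x, μ x = 1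

/-- `π` is a coupling of `μ` and `ν`. -/
def IsCoupling (μ ν : V → ℝ) (π : V → V → ℝ) : Prop :=
  (∀ x y, 0 ≤ π x y) ∧ (∀ x, ∑ y, π x y = μ x) ∧ (∀ y, ∑ x, π x y = ν y)

/-- Transport cost of a plan `π` with respect to the shortest-path graph distance. -/
def cost (π : V → V → ℝ) : ℝ := ∑ x, ∑ y, (G.dist x y : ℝ) * π x y

/-- Wasserstein-1 distance between two distributions on the vertex set. -/
def W1 (μ ν : V → ℝ) : ℝ := sInf {c : ℝ | ∃ π, IsCoupling μ ν π ∧ cost G π = c}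

/-- Dirac mass at `u`. -/
def dirac (u : V) : V → ℝ := fun x => if x = u then 1 else 0

/-- Uniform distribution on the neighbours of `u`. -/
def unif (u : V) : V → ℝ := fun x => if G.Adj u x then ((G.degree u : ℝ))⁻¹ else 0

/-- Lazy random-walk measure with laziness parameter `α`. -/
def mGen (α : ℝ) (u : V) : V → ℝ := fun x => α * dirac u x + (1 - α) * unif G u x

/-- Canonical laziness `1/(deg u + 1)`. -/
def alphaL (u : V) : ℝ := ((G.degree u : ℝ) + 1)⁻¹

/-- The lazy random-walk measure `m_u`. -/
def mLazy (u : V) : V → ℝ := mGen G (alphaL G u) u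

/-- Ollivier–Ricci curvature (lazy). -/
def cOR (i j : V) : ℝ := 1 - W1 G (mLazy G i) (mLazy G j)

/-- Non-lazy Ollivier–Ricci curvature. -/
def cOR0 (i j : V) : ℝ := 1 - W1 G (unif G i) (unif G j)

/-- Positive part `[x]₊`. -/
def pos (x : ℝ) : ℝ := max x 0

/-- Triangle count `△(u,v)`. -/
def tri (u v : V) : ℕ := (G.neighborFinset u ∩ G.neighborFinset v).card

/-- Unique neighbours `N(u) \ (N(v) ∪ {v})`. -/
def uniq (u v : V) : Finset V := G.neighborFinset u \ insert v (G.neighborFinset v)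

/-- `ξ_u(u,v)`: unique neighbours of `u` having a neighbour among unique neighbours of `v`. -/
def xiSet (u v : V) : Finset V := (uniq G u v).filter fun k => ∃ w ∈ uniq G v u, G.Adj k w

/-- `Ξ_uv`. -/
def Xi (u v : V) : ℕ := (xiSet G u v).card + (xiSet G v u).card

/-- `□̃(k,u,v) = |N(k) ∩ (N(v)\(N(u)∪{u}))|`. -/
def boxT (k u v : V) : ℕ := (G.neighborFinset k ∩ uniq G v u).card

/-- `ϖ_max(u,v)`. -/
def varpi (u v : V) : ℕ :=
  max (((G.neighborFinset u).erase v).sup fun k => boxT G k u v)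
      (((G.neighborFinset v).erase u).sup fun w => boxT G w v u)

/-- `þ_max(u,v) = ϖ_max(u,v)·max{ρ_u,ρ_v}`. -/
def thMax (u v : V) : ℕ := varpi G u v * max (G.degree u) (G.degree v)

/-- Edgewise 4-cycle coefficient `C₄(u,v)`. -/
def C4 (u v : V) : ℝ := if 0 < Xi G u v then (Xi G u v : ℝ) / (thMax G u v : ℝ) else 0

/-- Graph-wide 4-cycle constant `C₄(G)`. -/
def C4Graph : ℝ := sSup {x : ℝ | ∃ u v, G.Adj u v ∧ x = C4 G u v}

def rhoMin (i j : V) : ℕ := min (G.degree i) (G.degree j)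

def rhoMax (i j : V) : ℕ := max (G.degree i) (G.degree j)

/-- `𝔖(i,j)`. -/
def frakS (i j : V) : ℝ := 2 / (G.degree i : ℝ) + 2 / (G.degree j : ℝ) - 2

/-- `𝔗(i,j)`. -/
def frakT (i j : V) : ℝ := 2 / (rhoMax G i j : ℝ) + 1 / (rhoMin G i j : ℝ)

/-- `𝔎(i,j)`. -/
def frakK (i j : V) : ℝ := 1 - 1 / (rhoMin G i j : ℝ) - 1 / (rhoMax G i j : ℝ)

/-- `Z_min(i,j)`. -/
def Zmin (i j : V) : ℝ := (tri G i j : ℝ) / (rhoMin G i j : ℝ)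

/-- `Z_max(i,j)`. -/
def Zmax (i j : V) : ℝ := (tri G i j : ℝ) / (rhoMax G i j : ℝ)

/-- Balanced Forman curvature. -/
def cBF (i j : V) : ℝ :=
  if rhoMin G i j = 1 then 0
  else frakS G i j + frakT G i j * (tri G i j : ℝ) + C4 G i j

/-- `M` is a matching in the cross-edge bipartite graph `B_ij`. -/
def IsCrossMatching (i j : V) (M : Finset (V × V)) : Prop :=
  (∀ p ∈ M, p.1 ∈ uniq G i j ∧ p.2 ∈ uniq G j i ∧ G.Adj p.1 p.2) ∧
  (∀ p ∈ M, ∀ q ∈ M, p ≠ q → p.1 ≠ q.1 ∧ p.2 ≠ q.2)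

/-- Maximum matching size `𝔪(i,j)` in the cross-edge bipartite graph. -/
def matchNum (i j : V) : ℕ :=
  sSup {n : ℕ | ∃ M : Finset (V × V), IsCrossMatching G i j M ∧ M.card = n}

/-- `𝒮(i,j) = 𝔪(i,j)/ρ_max`. -/
def SS (i j : V) : ℝ := (matchNum G i j : ℝ) / (rhoMax G i j : ℝ)

/-- Lazy per-neighbour weight `w_u = (1-α)/ρ_u`. -/
def wA (α : ℝ) (u : V) : ℝ := (1 - α) / (G.degree u : ℝ)

/-- Lazy conductance sum `Σ`. -/
def SigmaA (αi αj : ℝ) (i j : V) : ℝ :=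
  (G.degree i : ℝ) / (1 - αi) + (G.degree j : ℝ) / (1 - αj)

/-- `Const_α`. -/
def ConstA (αi αj : ℝ) (i j : V) : ℝ :=
  -1 + 2 * (min αi ((1 - αj) / (G.degree j : ℝ)) + min αj ((1 - αi) / (G.degree i : ℝ)))
    + (pos (αi - (1 - αj) / (G.degree j : ℝ)) + pos ((1 - αj) / (G.degree j : ℝ) - αi)
      + pos (αj - (1 - αi) / (G.degree i : ℝ)) + pos ((1 - αi) / (G.degree i : ℝ) - αj))
    + ((G.degree i : ℝ) + (G.degree j : ℝ) - 2) / SigmaA G αi αj i j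

/-- `Slope_α`. -/
def SlopeA (αi αj : ℝ) (i j : V) : ℝ := wA G αi i + wA G αj j - 2 / SigmaA G αi αj i j

/-- `α_⋆`: `α_min` when the non-lazy curvature is nonnegative, `α_max` otherwise. -/
def alphaStar (i j : V) : ℝ :=
  if 0 ≤ cOR0 G i j then min (alphaL G i) (alphaL G j) else max (alphaL G i) (alphaL G j)

/-- `Δ_ij(α) = α_max − α_min` for the canonical laziness. -/
def DeltaL (i j : V) : ℝ := max (alphaL G i) (alphaL G j) - min (alphaL G i) (alphaL G j)

theorem W1_symm' (μ ν : V → ℝ) : W1 G μ ν = W1 G ν μ := by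
  have key : ∀ μ ν : V → ℝ, ∀ c : ℝ, (∃ π, IsCoupling μ ν π ∧ cost G π = c) →
      ∃ π, IsCoupling ν μ π ∧ cost G π = c := by
    rintro μ ν c ⟨π, ⟨h0, h1, h2⟩, hc⟩
    refine ⟨fun x y => π y x, ⟨fun x y => h0 y x, h2, h1⟩, ?_⟩
    rw [← hc]
    unfold cost
    rw [Finset.sum_comm]
    simp only [SimpleGraph.dist_comm]
  unfold W1
  congr 1
  ext c
  exact ⟨key μ ν c, key ν μ c⟩

theorem cost_nonneg' {μ ν : V → ℝ} {π : V → V → ℝ} (h : IsCoupling μ ν π) : 0 ≤ cost G π :=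
  Finset.sum_nonneg fun x _ => Finset.sum_nonneg fun y _ =>
    mul_nonneg (Nat.cast_nonneg _) (h.1 x y)

theorem W1_le_cost {μ ν : V → ℝ} {π : V → V → ℝ} (h : IsCoupling μ ν π) :
    W1 G μ ν ≤ cost G π := by
  refine csInf_le ⟨0, ?_⟩ ⟨π, h, rfl⟩
  rintro c ⟨π', h', rfl⟩
  exact cost_nonneg' G h'

theorem prodC {μ ν : V → ℝ} (hμ : IsProb μ) (hν : IsProb ν) :
    IsCoupling μ ν (fun x y => μ x * ν y) := by
  refine ⟨fun x y => mul_nonneg (hμ.1 x) (hν.1 y), fun x => ?_, fun y => ?_⟩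
  · rw [← Finset.mul_sum, hν.2, mul_one]
  · rw [← Finset.sum_mul, hμ.2, one_mul]

theorem transfer {μ ν : V → ℝ} (hμ : IsProb μ) (hν : IsProb ν) {A k : ℝ} (hk : 0 ≤ k)
    (h : ∀ π, IsCoupling μ ν π → A ≤ k * cost G π) : A ≤ k * W1 G μ ν := by
  rcases hk.eq_or_lt with rfl | hk
  · simpa using h _ (prodC hμ hν)
  · rw [← div_le_iff₀' hk]
    refine le_csInf ⟨_, _, prodC hμ hν, rfl⟩ ?_
    rintro c ⟨π, h', rfl⟩
    rw [div_le_iff₀' hk]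
    exact h π h'

theorem dirac_sum (u : V) : ∑ x, dirac u x = 1 := by simp [dirac]

theorem mixC {νi νj : V → ℝ} (hνj : IsProb νj) {π : V → V → ℝ}
    (h : IsCoupling νi νj π) (i j : V) {a b : ℝ} (hb : 0 ≤ b) (hab : b ≤ a) (ha : a ≤ 1) :
    IsCoupling (fun x => a * dirac i x + (1 - a) * νi x)
      (fun x => b * dirac j x + (1 - b) * νj x)
      (fun x y => b * (dirac i x * dirac j y) + (a - b) * (dirac i x * νj y)
        + (1 - a) * π x y) := by
  have hd : ∀ u x : V, 0 ≤ dirac u x := by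
    intro u x; unfold dirac; split_ifs <;> norm_num
  refine ⟨fun x y => ?_, fun x => ?_, fun y => ?_⟩
  · exact add_nonneg (add_nonneg (mul_nonneg hb (mul_nonneg (hd _ _) (hd _ _)))
      (mul_nonneg (by linarith) (mul_nonneg (hd _ _) (hνj.1 _))))
      (mul_nonneg (by linarith) (h.1 _ _))
  · simp only [Finset.sum_add_distrib, ← Finset.mul_sum, dirac_sum, hνj.2, h.2.1 x]
    ring
  · simp only [Finset.sum_add_distrib, ← Finset.mul_sum, ← Finset.sum_mul, dirac_sum, h.2.2 y]
    ring

theorem mix_cost (νj : V → ℝ) (π : V → V → ℝ) (i j : V) (a b : ℝ) :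
    cost G (fun x y => b * (dirac i x * dirac j y) + (a - b) * (dirac i x * νj y)
        + (1 - a) * π x y) =
      b * G.dist i j + (a - b) * (∑ y, (G.dist i y : ℝ) * νj y) + (1 - a) * cost G π := by
  unfold cost
  have e : ∀ x y : V, (G.dist x y : ℝ) * (b * (dirac i x * dirac j y)
      + (a - b) * (dirac i x * νj y) + (1 - a) * π x y) =
      b * (dirac i x * (dirac j y * G.dist x y)) + (a - b) * (dirac i x * (G.dist x y * νj y))
        + (1 - a) * (G.dist x y * π x y) := by intros; ring
  simp only [e, Finset.sum_add_distrib, ← Finset.mul_sum]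
  simp [dirac]

theorem mean_le {μ : V → ℝ} (hμ : IsProb μ) (f : V → ℝ) (c : ℝ)
    (h : ∀ y, μ y ≠ 0 → f y ≤ c) : ∑ y, f y * μ y ≤ c := by
  calc ∑ y, f y * μ y ≤ ∑ y, c * μ y := by
        refine Finset.sum_le_sum fun y _ => ?_
        by_cases hy : μ y = 0
        · simp [hy]
        · exact mul_le_mul_of_nonneg_right (h y hy) (hμ.1 y)
    _ = c := by rw [← Finset.mul_sum, hμ.2, mul_one]

theorem main_ge (hG : G.Connected) (i j : V) (hij : G.Adj i j)
    (a b : ℝ) (hb : 0 ≤ b) (hab : b ≤ a) (ha : a ≤ 1)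
    (νi νj : V → ℝ) (hνi : IsProb νi) (hνj : IsProb νj)
    (hsi : ∀ x, ¬ G.Adj i x → νi x = 0) (hsj : ∀ x, ¬ G.Adj j x → νj x = 0) (β : ℝ) :
    1 - W1 G (fun x => a * dirac i x + (1 - a) * νi x)
          (fun x => b * dirac j x + (1 - b) * νj x)
      ≥ (1 - β) * (1 - W1 G νi νj) - (|a - β| + |b - β|) := by
  have dij : G.dist i j = 1 := SimpleGraph.dist_eq_one_iff_adj.2 hij
  have di : ∀ x, νi x ≠ 0 → G.dist i x = 1 := fun x hx =>
    SimpleGraph.dist_eq_one_iff_adj.2 (by by_contra h; exact hx (hsi x h))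
  have dj : ∀ x, νj x ≠ 0 → G.dist j x = 1 := fun x hx =>
    SimpleGraph.dist_eq_one_iff_adj.2 (by by_contra h; exact hx (hsj x h))
  have diy : ∀ y, νj y ≠ 0 → (G.dist i y : ℝ) ≤ 2 := by
    intro y hy
    have h1 := hG.dist_triangle (u := i) (v := j) (w := y)
    have h2 := dj y hy
    exact_mod_cast (by omega : G.dist i y ≤ 2)
  have hM2 : ∑ y, (G.dist i y : ℝ) * νj y ≤ 2 := mean_le hνj _ _ diy
  have hMC : ∀ π, IsCoupling νi νj π → ∑ y, (G.dist i y : ℝ) * νj y ≤ 1 + cost G π := by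
    intro π h
    have e1 : ∑ y, (G.dist i y : ℝ) * νj y = ∑ x, ∑ y, (G.dist i y : ℝ) * π x y := by
      rw [Finset.sum_comm]
      refine Finset.sum_congr rfl fun y _ => ?_
      rw [← Finset.mul_sum, h.2.2 y]
    have e2 : ∑ x, ∑ y, (G.dist i x : ℝ) * π x y ≤ 1 := by
      simp only [← Finset.mul_sum, h.2.1]
      exact mean_le hνi _ _ fun y hy => by simp [di y hy]
    have e3 : ∑ x, ∑ y, (G.dist i y : ℝ) * π x y ≤
        ∑ x, ∑ y, (G.dist i x : ℝ) * π x y + cost G π := by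
      unfold cost
      simp only [← Finset.sum_add_distrib, ← add_mul]
      refine Finset.sum_le_sum fun x _ => Finset.sum_le_sum fun y _ =>
        mul_le_mul_of_nonneg_right ?_ (h.1 x y)
      exact_mod_cast hG.dist_triangle
    linarith
  have hbd : ∀ π, IsCoupling νi νj π →
      W1 G (fun x => a * dirac i x + (1 - a) * νi x) (fun x => b * dirac j x + (1 - b) * νj x)
        ≤ b + (a - b) * (∑ y, (G.dist i y : ℝ) * νj y) + (1 - a) * cost G π := by
    intro π h
    have := W1_le_cost G (mixC hνj h i j hb hab ha)
    rw [mix_cost, dij] at this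
    simpa using this
  set M := ∑ y, (G.dist i y : ℝ) * νj y
  set X := W1 G (fun x => a * dirac i x + (1 - a) * νi x)
    (fun x => b * dirac j x + (1 - b) * νj x)
  have A1 : X - (b + (a - b)) ≤ (1 - b) * W1 G νi νj := by
    refine transfer G hνi hνj (by linarith) fun π h => ?_
    nlinarith [hbd π h, mul_le_mul_of_nonneg_left (hMC π h) (sub_nonneg.2 hab)]
  have A2 : X - (b + 2 * (a - b)) ≤ (1 - a) * W1 G νi νj := by
    refine transfer G hνi hνj (by linarith) fun π h => ?_
    nlinarith [hbd π h, mul_le_mul_of_nonneg_left hM2 (sub_nonneg.2 hab)]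
  have W0 : 0 ≤ W1 G νi νj := by
    have := transfer G hνi hνj (A := 0) zero_le_one fun π h => by
      simpa using cost_nonneg' G h
    simpa using this
  have W3 : W1 G νi νj ≤ 3 := by
    refine (W1_le_cost G (prodC hνi hνj)).trans ?_
    unfold cost
    have e : ∀ x y : V, (G.dist x y : ℝ) * (νi x * νj y) = (G.dist x y * νj y) * νi x := by
      intros; ring
    simp only [e, ← Finset.sum_mul]
    refine mean_le hνi _ _ fun x hx => mean_le hνj _ _ fun y hy => ?_
    have h1 := hG.dist_triangle (u := x) (v := i) (w := y)
    have h2 := di x hx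
    have h3 := hG.dist_triangle (u := i) (v := j) (w := y)
    have h4 := dj y hy
    rw [SimpleGraph.dist_comm] at h2
    exact_mod_cast (by omega : G.dist x y ≤ 3)
  generalize W1 G νi νj = W at *
  rcases le_total β b with h1 | h1
  · rw [abs_of_nonneg (by linarith), abs_of_nonneg (by linarith)]
    nlinarith [mul_nonneg (sub_nonneg.2 h1) W0]
  · rcases le_total β a with h2 | h2
    · rw [abs_of_nonneg (by linarith), abs_of_nonpos (by linarith)]
      rcases le_total W 1 with h3 | h3
      · nlinarith [mul_nonneg (sub_nonneg.2 h1) (sub_nonneg.2 h3)]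
      · nlinarith [mul_nonneg (sub_nonneg.2 h2) (sub_nonneg.2 h3)]
    · rw [abs_of_nonpos (by linarith), abs_of_nonpos (by linarith)]
      nlinarith [mul_nonneg (sub_nonneg.2 h2) (sub_nonneg.2 W3)]

/-- the master lazy-to-non-lazy transfer inequality, for every `β ∈ [0,1]`. -/
theorem stmt3 (hG : G.Connected) (i j : V) (hij : G.Adj i j)
    (αi αj : ℝ) (hαi : αi ∈ Set.Icc (0:ℝ) 1) (hαj : αj ∈ Set.Icc (0:ℝ) 1)
    (νi νj : V → ℝ) (hνi : IsProb νi) (hνj : IsProb νj)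
    (hsi : ∀ x, ¬ G.Adj i x → νi x = 0) (hsj : ∀ x, ¬ G.Adj j x → νj x = 0)
    (β : ℝ) (hβ : β ∈ Set.Icc (0:ℝ) 1) :
    1 - W1 G (fun x => αi * dirac i x + (1 - αi) * νi x)
          (fun x => αj * dirac j x + (1 - αj) * νj x)
      ≥ (1 - β) * (1 - W1 G νi νj) - (|αi - β| + |αj - β|) := by
  rcases le_total αj αi with h | h
  · exact main_ge G hG i j hij αi αj hαj.1 h hαi.2 νi νj hνi hνj hsi hsj β
  · have := main_ge G hG j i hij.symm αj αi hαi.1 h hαj.2 νj νi hνj hνi hsj hsi β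
    rw [W1_symm' G νj νi, W1_symm' G (fun x => αj * dirac j x + (1 - αj) * νj x)] at this
    linarith

end

end Curv
end

section
/- Let (i,j) ∈ E be an edge of a finite connected simple graph G. Then the non-lazy Ollivier–Ricci curvature satisfies c_OR-0(i,j) ≥ −[𝔎(i,j) − Z_max(i,j) − 𝒮(i,j)]₊ − [𝔎(i,j) − Z_min(i,j) − 𝒮(i,j)]₊ + Z_max(i,j), where [x]₊ = max{0,x}. Moreover, this lower bound is nondecreasing as a function of 𝒮(i,j). -/
namespace Curv

open Finset

noncomputable section

variable {V : Type*} [Fintype V] [DecidableEq V] (G : SimpleGraph V) [DecidableRel G.Adj]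

/-- There is a transport plan from `μ` to `ν` of cost at most `c`. -/
def TP (μ ν : V → ℝ) (c : ℝ) : Prop := ∃ π, IsCoupling μ ν π ∧ cost G π ≤ c

theorem TP.add {μ ν μ' ν' : V → ℝ} {c c' : ℝ} (h : TP G μ ν c) (h' : TP G μ' ν' c') :
    TP G (fun x => μ x + μ' x) (fun x => ν x + ν' x) (c + c') := by
  obtain ⟨π, ⟨h0, h1, h2⟩, h3⟩ := h
  obtain ⟨π', ⟨h0', h1', h2'⟩, h3'⟩ := h'
  refine ⟨fun x y => π x y + π' x y, ⟨fun x y => add_nonneg (h0 x y) (h0' x y), ?_, ?_⟩, ?_⟩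
  · intro x; rw [Finset.sum_add_distrib, h1, h1']
  · intro x; rw [Finset.sum_add_distrib, h2, h2']
  · have : cost G (fun x y => π x y + π' x y) = cost G π + cost G π' := by
      simp only [cost, mul_add, Finset.sum_add_distrib]
    rw [this]; exact add_le_add h3 h3'

theorem TP.symm {μ ν : V → ℝ} {c : ℝ} (h : TP G μ ν c) : TP G ν μ c := by
  obtain ⟨π, ⟨h0, h1, h2⟩, h3⟩ := h
  refine ⟨fun x y => π y x, ⟨fun x y => h0 y x, h2, h1⟩, ?_⟩
  refine le_trans (le_of_eq ?_) h3
  unfold cost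
  rw [Finset.sum_comm]
  simp only [SimpleGraph.dist_comm]

theorem TP.W1_le {μ ν : V → ℝ} {c : ℝ} (h : TP G μ ν c) : W1 G μ ν ≤ c := by
  obtain ⟨π, h1, h3⟩ := h
  refine le_trans (csInf_le ⟨0, ?_⟩ ⟨π, h1, rfl⟩) h3
  rintro _ ⟨π', h', rfl⟩
  exact Finset.sum_nonneg fun x _ => Finset.sum_nonneg fun y _ =>
    mul_nonneg (Nat.cast_nonneg _) (h'.1 x y)

theorem TP.prod {μ ν : V → ℝ} (s D : ℝ) (hμ : ∀ x, 0 ≤ μ x) (hν : ∀ x, 0 ≤ ν x)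
    (hs : ∑ x, μ x = s) (hs' : ∑ x, ν x = s)
    (hD : ∀ x y, μ x ≠ 0 → ν y ≠ 0 → (G.dist x y : ℝ) ≤ D) : TP G μ ν (D * s) := by
  have hs0 : 0 ≤ s := hs ▸ Finset.sum_nonneg fun x _ => hμ x
  rcases hs0.eq_or_lt with h0 | h0
  · have e1 : ∀ x, μ x = 0 := fun x =>
      (Finset.sum_eq_zero_iff_of_nonneg fun x _ => hμ x).1 (hs.trans h0.symm) x (Finset.mem_univ x)
    have e2 : ∀ x, ν x = 0 := fun x =>
      (Finset.sum_eq_zero_iff_of_nonneg fun x _ => hν x).1 (hs'.trans h0.symm) x (Finset.mem_univ x)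
    refine ⟨fun _ _ => 0, ⟨fun _ _ => le_rfl, ?_, ?_⟩, ?_⟩
    · intro x; simp [e1]
    · intro x; simp [e2]
    · simp [cost, ← h0]
  · refine ⟨fun x y => μ x * ν y / s, ⟨fun x y => ?_, ?_, ?_⟩, ?_⟩
    · have := hμ x; have := hν y; positivity
    · intro x; rw [← Finset.sum_div, ← Finset.mul_sum, hs']; field_simp
    · intro x; rw [← Finset.sum_div, ← Finset.sum_mul, hs]; field_simp
    · have : ∀ x y, (G.dist x y : ℝ) * (μ x * ν y / s) ≤ D * (μ x * ν y / s) := by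
        intro x y
        by_cases h1 : μ x = 0
        · simp [h1]
        by_cases h2 : ν y = 0
        · simp [h2]
        refine mul_le_mul_of_nonneg_right (hD x y h1 h2) ?_
        have := hμ x; have := hν y; positivity
      refine le_trans (Finset.sum_le_sum fun x _ => Finset.sum_le_sum fun y _ => this x y) ?_
      refine le_of_eq ?_
      simp only [← Finset.mul_sum, ← Finset.sum_div, hs', ← Finset.sum_mul, hs]
      field_simp

theorem TP.congr {μ ν μ' ν' : V → ℝ} {c c' : ℝ} (h : TP G μ ν c) (h1 : ∀ x, μ' x = μ x)
    (h2 : ∀ x, ν' x = ν x) (h3 : c ≤ c') : TP G μ' ν' c' := by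
  obtain rfl : μ' = μ := funext h1
  obtain rfl : ν' = ν := funext h2
  obtain ⟨π, h, h'⟩ := h
  exact ⟨π, h, h'.trans h3⟩

theorem TP.diag (μ : V → ℝ) (hμ : ∀ x, 0 ≤ μ x) : TP G μ μ 0 := by
  refine ⟨fun x y => if x = y then μ x else 0, ⟨fun x y => ?_, ?_, ?_⟩, ?_⟩
  · dsimp only; split_ifs; exacts [hμ x, le_rfl]
  · intro x; simp
  · intro x; simp
  · simp [cost]

/-- product plan between scaled measures -/
theorem TP.sprod {μ ν : V → ℝ} (s a b ma mb D : ℝ) (hμ : ∀ x, 0 ≤ μ x) (hν : ∀ x, 0 ≤ ν x)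
    (ha : 0 ≤ a) (hb : 0 ≤ b)
    (hs : ∑ x, μ x = ma) (hs' : ∑ x, ν x = mb) (h1 : a * ma = s) (h2 : b * mb = s)
    (hD : ∀ x y, μ x ≠ 0 → ν y ≠ 0 → (G.dist x y : ℝ) ≤ D) :
    TP G (fun x => a * μ x) (fun x => b * ν x) (D * s) := by
  refine TP.prod G s D (fun x => mul_nonneg ha (hμ x)) (fun x => mul_nonneg hb (hν x)) ?_ ?_ ?_
  · rw [← Finset.mul_sum, hs, h1]
  · rw [← Finset.mul_sum, hs', h2]
  · intro x y hx hy
    exact hD x y (right_ne_zero_of_mul hx) (right_ne_zero_of_mul hy)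

theorem residual (i j : V) (u c v : V → ℝ) (a b r C q : ℝ) (ha : 0 < a) (hb : 0 < b)
    (hu : ∀ x, 0 ≤ u x) (hc : ∀ x, 0 ≤ c x) (hv : ∀ x, 0 ≤ v x)
    (sr : ∑ x, u x = r) (sC : ∑ x, c x = C) (sq : ∑ x, v x = q)
    (bal : a + r = b + C + q)
    (dji : (G.dist j i : ℝ) ≤ 1)
    (djc : ∀ y, c y ≠ 0 → (G.dist j y : ℝ) ≤ 1)
    (djv : ∀ y, v y ≠ 0 → (G.dist j y : ℝ) ≤ 1)
    (dui : ∀ x, u x ≠ 0 → (G.dist x i : ℝ) ≤ 1)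
    (duc : ∀ x y, u x ≠ 0 → c y ≠ 0 → (G.dist x y : ℝ) ≤ 2)
    (duv : ∀ x y, u x ≠ 0 → v y ≠ 0 → (G.dist x y : ℝ) ≤ 3) :
    TP G (fun x => a * dirac j x + u x) (fun x => b * dirac i x + c x + v x)
      (a + r + pos (r - b) + pos (q - a)) := by
  have hr0 : 0 ≤ r := sr ▸ Finset.sum_nonneg fun x _ => hu x
  have hC0 : 0 ≤ C := sC ▸ Finset.sum_nonneg fun x _ => hc x
  have hq0 : 0 ≤ q := sq ▸ Finset.sum_nonneg fun x _ => hv x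
  have hd : ∀ k x : V, 0 ≤ dirac k x := by intro k x; unfold dirac; split_ifs <;> norm_num
  have sd : ∀ k : V, ∑ x, dirac k x = 1 := by intro k; simp [dirac]
  have nd : ∀ k x : V, dirac k x ≠ 0 → x = k := by
    intro k x h; by_contra h'; simp [dirac, h'] at h
  have Dji : ∀ x y, dirac j x ≠ 0 → dirac i y ≠ 0 → (G.dist x y : ℝ) ≤ 1 := by
    intro x y hx hy; rw [nd _ _ hx, nd _ _ hy]; exact dji
  have Djc : ∀ x y, dirac j x ≠ 0 → c y ≠ 0 → (G.dist x y : ℝ) ≤ 1 := by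
    intro x y hx hy; rw [nd _ _ hx]; exact djc y hy
  have Djv : ∀ x y, dirac j x ≠ 0 → v y ≠ 0 → (G.dist x y : ℝ) ≤ 1 := by
    intro x y hx hy; rw [nd _ _ hx]; exact djv y hy
  have Dui : ∀ x y, u x ≠ 0 → dirac i y ≠ 0 → (G.dist x y : ℝ) ≤ 1 := by
    intro x y hx hy; rw [nd _ _ hy]; exact dui x hx
  rcases lt_or_ge r b with h1 | h1
  · have T1 := TP.sprod G r 1 r r 1 1 hu (hd i) zero_le_one hr0 sr (sd i) (by ring) (by ring) Dui
    have T2 := TP.sprod G (b - r) (b - r) (b - r) 1 1 1 (hd j) (hd i) (by linarith) (by linarith)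
      (sd j) (sd i) (by ring) (by ring) Dji
    have T3 := TP.sprod G C C 1 1 C 1 (hd j) hc hC0 zero_le_one
      (sd j) sC (by ring) (by ring) Djc
    have T4 := TP.sprod G q q 1 1 q 1 (hd j) hv hq0 zero_le_one
      (sd j) sq (by ring) (by ring) Djv
    refine TP.congr G (((T1.add G T2).add G T3).add G T4) ?_ ?_ ?_
    · intro x
      have : a = b - r + C + q := by linarith
      rw [this]; ring
    · intro x; ring
    · have : 0 ≤ pos (r - b) := le_max_right _ _
      have : 0 ≤ pos (q - a) := le_max_right _ _
      linarith
  · have hr : 0 < r := lt_of_lt_of_le hb h1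
    have T1 := TP.sprod G b (b / r) b r 1 1 hu (hd i) (by positivity) hb.le sr (sd i)
      (by field_simp) (by ring) Dui
    have p1 : pos (r - b) = r - b := max_eq_left (by linarith)
    rcases lt_or_ge q a with h2 | h2
    · have hC : 0 < C := by linarith
      have p2 : 0 ≤ pos (q - a) := le_max_right _ _
      have T2 := TP.sprod G q q 1 1 q 1 (hd j) hv hq0 zero_le_one
        (sd j) sq (by ring) (by ring) Djv
      have T3 := TP.sprod G (a - q) (a - q) ((a - q) / C) 1 C 1 (hd j) hc (by linarith)
        (div_nonneg (by linarith) hC.le) (sd j) sC (by ring) (by field_simp) Djc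
      have T4 := TP.sprod G (r - b) ((r - b) / r) ((r - b) / C) r C 2 hu hc
        (div_nonneg (by linarith) hr.le) (div_nonneg (by linarith) hC.le)
        sr sC (by field_simp) (by field_simp) duc
      refine TP.congr G (((T1.add G T2).add G T3).add G T4) ?_ ?_ ?_
      · intro x; field_simp; ring
      · intro x
        have e : (a - q) / C + (r - b) / C = 1 := by
          field_simp; linarith
        linear_combination (-c x) * e
      · linarith
    · have hq : 0 < q := by linarith
      have p2 : pos (q - a) = q - a := max_eq_left (by linarith)
      have T2 := TP.sprod G a a (a / q) 1 q 1 (hd j) hv ha.le (by positivity)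
        (sd j) sq (by ring) (by field_simp) Djv
      have T3 := TP.sprod G C (C / r) 1 r C 2 hu hc (by positivity) zero_le_one
        sr sC (by field_simp) (by ring) duc
      have T4 := TP.sprod G (q - a) ((q - a) / r) ((q - a) / q) r q 3 hu hv
        (div_nonneg (by linarith) hr.le) (div_nonneg (by linarith) hq.le)
        sr sq (by field_simp) (by field_simp) duv
      refine TP.congr G (((T1.add G T2).add G T3).add G T4) ?_ ?_ ?_
      · intro x
        have e : b / r + C / r + (q - a) / r = 1 := by
          field_simp; linarith
        linear_combination (-u x) * e
      · intro x; field_simp; ring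
      · linarith

theorem TP.matching (i j : V) (M : Finset (V × V)) (hM : IsCrossMatching G i j M) (a : ℝ)
    (ha : 0 ≤ a) :
    TP G (fun x => if x ∈ M.image Prod.fst then a else 0)
      (fun x => if x ∈ M.image Prod.snd then a else 0) (M.card * a) := by
  refine ⟨fun x y => if (x, y) ∈ M then a else 0, ⟨fun x y => ?_, ?_, ?_⟩, ?_⟩
  · dsimp only; split_ifs; exacts [ha, le_rfl]
  · intro x
    dsimp only
    split_ifs with h
    · obtain ⟨p, hp, rfl⟩ := Finset.mem_image.1 h
      rw [Finset.sum_eq_single p.2]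
      · simp [hp]
      · intro y _ hy
        rw [if_neg]
        intro h'
        exact (hM.2 _ h' _ hp (fun e => hy (by rw [← e]))).1 rfl
      · simp
    · refine Finset.sum_eq_zero fun y _ => if_neg fun h' => h ?_
      exact Finset.mem_image.2 ⟨_, h', rfl⟩
  · intro y
    dsimp only
    split_ifs with h
    · obtain ⟨p, hp, rfl⟩ := Finset.mem_image.1 h
      rw [Finset.sum_eq_single p.1]
      · simp [hp]
      · intro y _ hy
        rw [if_neg]
        intro h'
        exact (hM.2 _ h' _ hp (fun e => hy (by rw [← e]))).2 rfl
      · simp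
    · refine Finset.sum_eq_zero fun y _ => if_neg fun h' => h ?_
      exact Finset.mem_image.2 ⟨_, h', rfl⟩
  · unfold cost
    rw [← Finset.sum_product', Finset.univ_product_univ]
    have : ∀ p : V × V, (G.dist p.1 p.2 : ℝ) * (if (p.1, p.2) ∈ M then a else 0)
        = if p ∈ M then a else 0 := by
      intro p
      by_cases hp : p ∈ M
      · have := SimpleGraph.dist_eq_one_iff_adj.2 (hM.1 p hp).2.2
        simp [hp, this]
      · simp [hp]
    simp only [this]
    simp

theorem card_uniq (i j : V) (hij : G.Adj i j) :
    (uniq G i j).card + tri G i j + 1 = G.degree i := by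
  have h1 : G.neighborFinset i = insert j (uniq G i j ∪ (G.neighborFinset i ∩ G.neighborFinset j)) := by
    ext x
    simp only [uniq, Finset.mem_insert, Finset.mem_union, Finset.mem_sdiff, Finset.mem_inter,
      SimpleGraph.mem_neighborFinset]
    by_cases hx : x = j
    · subst hx; simp [hij]
    · tauto
  rw [← SimpleGraph.card_neighborFinset_eq_degree, h1, Finset.card_insert_of_notMem,
    Finset.card_union_of_disjoint]
  · rfl
  · rw [Finset.disjoint_left]; intro x; simp [uniq]; tauto
  · simp [uniq]

theorem core (i j : V) (hij : G.Adj i j) (hle : G.degree j ≤ G.degree i) (M : Finset (V × V))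
    (hM : IsCrossMatching G i j M) :
    TP G (unif G i) (unif G j)
      (1 - (tri G i j : ℝ) / G.degree i
        + pos (1 - 1 / (G.degree j : ℝ) - 1 / (G.degree i : ℝ) - (tri G i j : ℝ) / G.degree i
            - (M.card : ℝ) / G.degree i)
        + pos (1 - 1 / (G.degree j : ℝ) - 1 / (G.degree i : ℝ) - (tri G i j : ℝ) / G.degree j
            - (M.card : ℝ) / G.degree i)) := by
  have ci := card_uniq G i j hij
  have cj := card_uniq G j i hij.symm
  have htri : tri G j i = tri G i j := by unfold tri; rw [Finset.inter_comm]
  rw [htri] at cj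
  have hN : (0:ℝ) < G.degree i := by
    have : 0 < G.degree i := by omega
    exact_mod_cast this
  have hn : (0:ℝ) < G.degree j := by
    have : 0 < G.degree j := by omega
    exact_mod_cast this
  have hle' : (G.degree i : ℝ)⁻¹ ≤ (G.degree j : ℝ)⁻¹ := inv_anti₀ hn (by exact_mod_cast hle)
  have ci' : ((uniq G i j).card : ℝ) + tri G i j + 1 = G.degree i := by exact_mod_cast ci
  have cj' : ((uniq G j i).card : ℝ) + tri G i j + 1 = G.degree j := by exact_mod_cast cj
  have hF : M.image Prod.fst ⊆ uniq G i j := by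
    intro x hx; obtain ⟨p, hp, rfl⟩ := Finset.mem_image.1 hx; exact (hM.1 p hp).1
  have hS : M.image Prod.snd ⊆ uniq G j i := by
    intro x hx; obtain ⟨p, hp, rfl⟩ := Finset.mem_image.1 hx; exact (hM.1 p hp).2.1
  have cF : (M.image Prod.fst).card = M.card := by
    refine Finset.card_image_of_injOn fun p hp q hq e => ?_
    by_contra h; exact (hM.2 p hp q hq h).1 e
  have cS : (M.image Prod.snd).card = M.card := by
    refine Finset.card_image_of_injOn fun p hp q hq e => ?_
    by_contra h; exact (hM.2 p hp q hq h).2 e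
  have mi : ∀ x, x ∈ uniq G i j ↔ G.Adj i x ∧ x ≠ j ∧ ¬ G.Adj j x := by
    intro x; simp [uniq]
  have mj : ∀ x, x ∈ uniq G j i ↔ G.Adj j x ∧ x ≠ i ∧ ¬ G.Adj i x := by
    intro x; simp [uniq]
  set F := M.image Prod.fst with hFdef
  set S := M.image Prod.snd with hSdef
  set N : ℝ := ((G.degree i : ℕ) : ℝ) with hNdef
  set n : ℝ := ((G.degree j : ℕ) : ℝ) with hndef
  set K := G.neighborFinset i ∩ G.neighborFinset j with hK
  have mK : ∀ x, x ∈ K ↔ G.Adj i x ∧ G.Adj j x := by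
    intro x; simp [hK]
  have cK : K.card = tri G i j := rfl
  have hNi : 0 < N⁻¹ := inv_pos.2 hN
  have hni : 0 < n⁻¹ := inv_pos.2 hn
  have d1 : ∀ {x y}, G.Adj x y → (G.dist x y : ℝ) ≤ 1 := by
    intro x y h; rw [SimpleGraph.dist_eq_one_iff_adj.2 h]; norm_num
  have R := residual G i j (fun x => if x ∈ uniq G i j \ F then N⁻¹ else 0)
    (fun x => if x ∈ K then n⁻¹ - N⁻¹ else 0)
    (fun x => (if x ∈ uniq G j i then n⁻¹ else 0) - (if x ∈ S then N⁻¹ else 0))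
    N⁻¹ n⁻¹ ((N - 1 - tri G i j - M.card) * N⁻¹) (tri G i j * (n⁻¹ - N⁻¹))
    ((n - 1 - tri G i j) * n⁻¹ - M.card * N⁻¹) hNi hni
    (by intro x; split_ifs; exacts [hNi.le, le_rfl])
    (by intro x; split_ifs; exacts [by linarith, le_rfl])
    (by intro x
        by_cases h : x ∈ S
        · simp [h, hS h, hle']
        · simp only [h, if_false, sub_zero]; split_ifs; exacts [hni.le, le_rfl])
    (by
      have : ((uniq G i j \ F).card : ℝ) = N - 1 - tri G i j - M.card := by
        rw [Finset.card_sdiff_of_subset hF, cF, Nat.cast_sub (cF ▸ Finset.card_le_card hF)]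
        linarith
      rw [Finset.sum_ite_mem, Finset.univ_inter, Finset.sum_const, nsmul_eq_mul, this])
    (by rw [Finset.sum_ite_mem, Finset.univ_inter, Finset.sum_const, nsmul_eq_mul, cK])
    (by
      rw [Finset.sum_sub_distrib, Finset.sum_ite_mem, Finset.univ_inter, Finset.sum_const,
        nsmul_eq_mul, Finset.sum_ite_mem, Finset.univ_inter, Finset.sum_const, nsmul_eq_mul, cS,
        ← cj']
      ring)
    (by field_simp; ring)
    (d1 hij.symm)
    (by
      intro y hy
      have : y ∈ K := by by_contra h; simp [h] at hy
      exact d1 ((mK y).1 this).2)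
    (by
      intro y hy
      have : y ∈ uniq G j i := by
        by_contra h
        have h' : y ∉ S := fun h' => h (hS h')
        simp [h, h'] at hy
      exact d1 ((mj y).1 this).1)
    (by
      intro x hx
      have : x ∈ uniq G i j := by
        by_contra h; simp [h] at hx
      exact d1 ((mi x).1 this).1.symm)
    (by
      intro x y hx hy
      have hx' : x ∈ uniq G i j := by
        by_contra h; simp [h] at hx
      have hy' : y ∈ K := by by_contra h; simp [h] at hy
      have := SimpleGraph.dist_le (SimpleGraph.Walk.cons ((mi x).1 hx').1.symm
        (SimpleGraph.Walk.cons ((mK y).1 hy').1 SimpleGraph.Walk.nil))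
      exact_mod_cast this)
    (by
      intro x y hx hy
      have hx' : x ∈ uniq G i j := by
        by_contra h; simp [h] at hx
      have hy' : y ∈ uniq G j i := by
        by_contra h
        have h' : y ∉ S := fun h' => h (hS h')
        simp [h, h'] at hy
      have := SimpleGraph.dist_le (SimpleGraph.Walk.cons ((mi x).1 hx').1.symm
        (SimpleGraph.Walk.cons hij (SimpleGraph.Walk.cons ((mj y).1 hy').1 SimpleGraph.Walk.nil)))
      exact_mod_cast this)
  have T1 := TP.diag G (fun x => if x ∈ K then N⁻¹ else 0)
    (by intro x; split_ifs; exacts [hNi.le, le_rfl])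
  have T2 := TP.matching G i j M hM N⁻¹ hNi.le
  refine TP.congr G ((T1.add G T2).add G R) ?_ ?_ ?_
  · intro x
    rw [← hFdef]
    simp only [unif, dirac, mK, Finset.mem_sdiff]
    rw [← hNdef]
    by_cases h1 : x = j
    · subst h1
      have a1 : x ∉ F := fun h => ((mi x).1 (hF h)).2.1 rfl
      have a2 : x ∉ uniq G i x := fun h => ((mi x).1 h).2.1 rfl
      simp [hij, a1, a2]
    · by_cases h2 : G.Adj i x
      · by_cases h3 : G.Adj j x
        · have a2 : x ∉ uniq G i j := fun h => ((mi x).1 h).2.2 h3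
          have a1 : x ∉ F := fun h => a2 (hF h)
          simp [h1, h2, h3, a1, a2]
        · have a2 : x ∈ uniq G i j := (mi x).2 ⟨h2, h1, h3⟩
          by_cases a1 : x ∈ F <;> simp [h1, h2, h3, a1, a2]
      · have a2 : x ∉ uniq G i j := fun h => h2 ((mi x).1 h).1
        have a1 : x ∉ F := fun h => a2 (hF h)
        simp [h1, h2, a1, a2]
  · intro x
    rw [← hSdef]
    simp only [unif, dirac, mK]
    rw [← hndef]
    by_cases h1 : x = i
    · subst h1
      have a2 : x ∉ uniq G j x := fun h => ((mj x).1 h).2.1 rfl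
      have a1 : x ∉ S := fun h => a2 (hS h)
      simp [hij.symm, a1, a2]
    · by_cases h2 : G.Adj j x
      · by_cases h3 : G.Adj i x
        · have a2 : x ∉ uniq G j i := fun h => ((mj x).1 h).2.2 h3
          have a1 : x ∉ S := fun h => a2 (hS h)
          simp [h1, h2, h3, a1, a2]
        · have a2 : x ∈ uniq G j i := (mj x).2 ⟨h2, h1, h3⟩
          by_cases a1 : x ∈ S <;> simp [h1, h2, h3, a1, a2]
      · have a2 : x ∉ uniq G j i := fun h => h2 ((mj x).1 h).1
        have a1 : x ∉ S := fun h => a2 (hS h)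
        simp [h1, h2, a1, a2]
  · have e1 : (N - 1 - tri G i j - M.card) * N⁻¹ - n⁻¹
        = 1 - 1 / n - 1 / N - (tri G i j : ℝ) / N - (M.card : ℝ) / N := by
      field_simp; ring
    have e2 : (n - 1 - tri G i j) * n⁻¹ - M.card * N⁻¹ - N⁻¹
        = 1 - 1 / n - 1 / N - (tri G i j : ℝ) / n - (M.card : ℝ) / N := by
      field_simp; ring
    rw [e1, e2]
    have e3 : M.card * N⁻¹ + N⁻¹ + (N - 1 - tri G i j - M.card) * N⁻¹ = 1 - (tri G i j : ℝ) / N := by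
      field_simp; ring
    linarith

theorem exists_matching (i j : V) :
    ∃ M : Finset (V × V), IsCrossMatching G i j M ∧ M.card = matchNum G i j := by
  refine Nat.sSup_mem (s := {n : ℕ | ∃ M : Finset (V × V), IsCrossMatching G i j M ∧ M.card = n})
    ⟨0, ∅, ⟨by simp, by simp⟩, rfl⟩ ⟨Fintype.card (V × V), ?_⟩
  rintro _ ⟨M, _, rfl⟩
  exact Finset.card_le_univ M

/-- quadrangle-augmented Jost–Liu lower bound for the non-lazy curvature,
and monotonicity of the bound in the matching statistic. -/
theorem stmt10 (hG : G.Connected) (i j : V) (hij : G.Adj i j) :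
    (cOR0 G i j ≥
      -(pos (frakK G i j - Zmax G i j - SS G i j))
        - pos (frakK G i j - Zmin G i j - SS G i j) + Zmax G i j) ∧
    (∀ s t : ℝ, s ≤ t →
      -(pos (frakK G i j - Zmax G i j - s)) - pos (frakK G i j - Zmin G i j - s) + Zmax G i j
        ≤ -(pos (frakK G i j - Zmax G i j - t)) - pos (frakK G i j - Zmin G i j - t)
          + Zmax G i j) := by
  constructor
  · obtain ⟨M, hM, hc⟩ := exists_matching G i j
    unfold cOR0 frakK Zmax Zmin SS rhoMin rhoMax
    rw [← hc]
    rcases le_total (G.degree j) (G.degree i) with h | h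
    · have := (core G i j hij h M hM).W1_le
      rw [max_eq_left h, min_eq_right h]
      linarith
    · have hM' : IsCrossMatching G j i (M.map (Equiv.prodComm V V).toEmbedding) := by
        constructor
        · intro p hp
          obtain ⟨q, hq, rfl⟩ := Finset.mem_map.1 hp
          have := hM.1 q hq
          exact ⟨this.2.1, this.1, this.2.2.symm⟩
        · intro p hp p' hp' hne
          obtain ⟨q, hq, rfl⟩ := Finset.mem_map.1 hp
          obtain ⟨q', hq', rfl⟩ := Finset.mem_map.1 hp'
          have := hM.2 q hq q' hq' (fun e => hne (by rw [e]))
          exact ⟨this.2, this.1⟩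
      have := ((core G j i hij.symm h _ hM').symm).W1_le
      rw [Finset.card_map, show tri G j i = tri G i j by unfold tri; rw [Finset.inter_comm]] at this
      rw [max_eq_right h, min_eq_left h]
      linarith
  · intro s t hst
    have m : ∀ x : ℝ, pos (x - t) ≤ pos (x - s) := fun x =>
      max_le_max (by linarith) le_rfl
    have := m (frakK G i j - Zmax G i j)
    have := m (frakK G i j - Zmin G i j)
    linarith

end

end Curv
end

section
/- Let (i,j) ∈ E be an edge of a finite connected simple graph G and let α_i, α_j ∈ [0,1). Then c_OR(i,j) ≤ Const_α + Slope_α·△(i,j). Moreover Slope_α > 0, so the affine map t ↦ Const_α + Slope_α·t is nondecreasing on [0, ρ_min − 1]. -/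
namespace Curv

open Finset

noncomputable section

variable {V : Type*} [Fintype V] [DecidableEq V] (G : SimpleGraph V) [DecidableRel G.Adj]

theorem aux_prob (α : ℝ) (h0 : 0 ≤ α) (h1 : α < 1) (u : V) (hd : 0 < G.degree u) :
    (∀ x, 0 ≤ mGen G α u x) ∧ ∑ x, mGen G α u x = 1 := by
  constructor
  · intro x
    have : 0 ≤ 1 - α := by linarith
    unfold mGen dirac unif
    split_ifs <;> positivity
  · have hd' : (G.degree u : ℝ) ≠ 0 := by positivity
    unfold mGen dirac unif
    rw [Finset.sum_add_distrib, ← Finset.mul_sum, ← Finset.mul_sum]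
    rw [← Finset.sum_filter (s := Finset.univ) (p := fun x => G.Adj u x)]
    rw [Finset.sum_const, ← SimpleGraph.neighborFinset_eq_filter, SimpleGraph.card_neighborFinset_eq_degree]
    simp [hd']

theorem aux_core (α : ℝ) (u v : V) (huv : G.Adj u v) :
    ∑ x ∈ insert u (insert v (G.neighborFinset u ∩ G.neighborFinset v)), mGen G α u x
      = α + wA G α u * (1 + (tri G u v : ℝ)) := by
  have hne := huv.ne
  rw [Finset.sum_insert (by simp [hne]), Finset.sum_insert (by simp)]
  have : ∑ x ∈ G.neighborFinset u ∩ G.neighborFinset v, mGen G α u x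
      = ∑ x ∈ G.neighborFinset u ∩ G.neighborFinset v, wA G α u := by
    apply Finset.sum_congr rfl
    intro x hx
    simp only [Finset.mem_inter, SimpleGraph.mem_neighborFinset] at hx
    simp [mGen, dirac, unif, wA, hx.1, hx.1.ne', div_eq_mul_inv]
  rw [this, Finset.sum_const, nsmul_eq_mul]
  simp [mGen, dirac, unif, wA, huv, hne.symm, div_eq_mul_inv, tri]
  ring

theorem aux_pot (C : Finset V) (a : ℝ) (μ : V → ℝ) (h : ∑ x, μ x = 1) :
    ∑ x, (if x ∈ C then 1 else a) * μ x = a + (1 - a) * ∑ x ∈ C, μ x := by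
  have : ∀ x, (if x ∈ C then 1 else a) * μ x = a * μ x + (1 - a) * (if x ∈ C then μ x else 0) := by
    intro x; split_ifs <;> ring
  simp_rw [this]
  rw [Finset.sum_add_distrib, ← Finset.mul_sum, ← Finset.mul_sum, h]
  simp

theorem aux_dual (hG : G.Connected) (μ ν : V → ℝ) (C : Finset V) (a : ℝ) (ha0 : 0 ≤ a) (ha1 : a ≤ 1)
    (hC : ∀ x, x ∉ C → μ x = 0 ∨ ν x = 0)
    (hμ : ∑ x, μ x = 1) (hν : ∑ x, ν x = 1) (π : V → V → ℝ) (hπ : IsCoupling μ ν π) :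
    2 - cost G π ≤ (a + (1 - a) * ∑ x ∈ C, μ x) + ((1 - a) + a * ∑ x ∈ C, ν x) := by
  obtain ⟨hp, hr, hc⟩ := hπ
  have e1 := aux_pot C a μ hμ
  have e2 := aux_pot C (1 - a) ν hν
  rw [sub_sub_cancel] at e2
  rw [← e1, ← e2]
  have f1 : ∑ x, (if x ∈ C then 1 else a) * μ x = ∑ x, ∑ y, (if x ∈ C then 1 else a) * π x y := by
    simp_rw [← Finset.mul_sum, hr]
  have f2 : ∑ y, (if y ∈ C then 1 else (1 - a)) * ν y
      = ∑ x, ∑ y, (if y ∈ C then 1 else (1 - a)) * π x y := by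
    rw [Finset.sum_comm]
    simp_rw [← Finset.mul_sum, hc]
  have f3 : (2:ℝ) = ∑ x, ∑ y, 2 * π x y := by
    simp_rw [← Finset.mul_sum, hr, hμ]; norm_num
  rw [f1, f2, cost, sub_le_iff_le_add]
  conv_lhs => rw [f3]
  simp_rw [← Finset.sum_add_distrib]
  refine Finset.sum_le_sum fun x _ => Finset.sum_le_sum fun y _ => ?_
  rw [← add_mul, ← add_mul]
  by_cases hxy : x = y
  · subst hxy
    by_cases hx : x ∈ C
    · simp only [hx, if_true, SimpleGraph.dist_self]
      norm_num
    · have : π x x = 0 := by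
        apply le_antisymm _ (hp x x)
        rcases hC x hx with h | h
        · rw [← h, ← hr x]
          exact Finset.single_le_sum (f := fun y => π x y) (fun y _ => hp x y) (Finset.mem_univ x)
        · rw [← h, ← hc x]
          exact Finset.single_le_sum (f := fun y => π y x) (fun y _ => hp y x) (Finset.mem_univ x)
      simp [this]
  · apply mul_le_mul_of_nonneg_right _ (hp x y)
    have h1 : (1:ℝ) ≤ (G.dist x y : ℝ) := by
      exact_mod_cast hG.pos_dist_of_ne hxy
    split_ifs <;> linarith

/-- monotone affine coverage envelope for the lazy OR curvature. -/
theorem stmt12 (hG : G.Connected) (i j : V) (hij : G.Adj i j)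
    (αi αj : ℝ) (hαi : αi ∈ Set.Ico (0:ℝ) 1) (hαj : αj ∈ Set.Ico (0:ℝ) 1) :
    (1 - W1 G (mGen G αi i) (mGen G αj j)
      ≤ ConstA G αi αj i j + SlopeA G αi αj i j * (tri G i j : ℝ)) ∧
    0 < SlopeA G αi αj i j ∧
    (∀ s t : ℝ, 0 ≤ s → s ≤ t → t ≤ (rhoMin G i j : ℝ) - 1 →
      ConstA G αi αj i j + SlopeA G αi αj i j * s
        ≤ ConstA G αi αj i j + SlopeA G αi αj i j * t) := by
  obtain ⟨hi0, hi1⟩ := hαi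
  obtain ⟨hj0, hj1⟩ := hαj
  have hdi : 0 < G.degree i := (G.degree_pos_iff_exists_adj i).2 ⟨j, hij⟩
  have hdj : 0 < G.degree j := (G.degree_pos_iff_exists_adj j).2 ⟨i, hij.symm⟩
  have hdi' : (0:ℝ) < G.degree i := by exact_mod_cast hdi
  have hdj' : (0:ℝ) < G.degree j := by exact_mod_cast hdj
  have hi2 : 0 < 1 - αi := by linarith
  have hj2 : 0 < 1 - αj := by linarith
  have hwi : 0 < wA G αi i := div_pos hi2 hdi'
  have hwj : 0 < wA G αj j := div_pos hj2 hdj'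
  have hdwi : (G.degree i : ℝ) * wA G αi i = 1 - αi := by unfold wA; field_simp
  have hdwj : (G.degree j : ℝ) * wA G αj j = 1 - αj := by unfold wA; field_simp
  have hS : SigmaA G αi αj i j = (wA G αi i + wA G αj j) / (wA G αi i * wA G αj j) := by
    unfold SigmaA wA; field_simp
    ring
  have hslope : 0 < SlopeA G αi αj i j := by
    unfold SlopeA
    rw [hS, div_div_eq_mul_div, sub_pos, div_lt_iff₀ (by positivity)]
    nlinarith [mul_pos hwi hwj]
  refine ⟨?_, hslope, fun s t _ hst _ => by
    linarith [mul_le_mul_of_nonneg_left hst hslope.le]⟩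
  obtain ⟨pi0, pi1⟩ := aux_prob G αi hi0 hi1 i hdi
  obtain ⟨pj0, pj1⟩ := aux_prob G αj hj0 hj1 j hdj
  have mm : ∀ a b : ℝ, 2 * min a b + (pos (a - b) + pos (b - a)) = a + b := by
    intro a b
    unfold pos
    rcases le_total a b with h | h
    · rw [min_eq_left h, max_eq_right (by linarith), max_eq_left (by linarith)]; ring
    · rw [min_eq_right h, max_eq_left (by linarith), max_eq_right (by linarith)]; ring
  have hConst : ConstA G αi αj i j = -1 + αi + αj + wA G αi i + wA G αj j
      + ((G.degree i : ℝ) + (G.degree j : ℝ) - 2) / SigmaA G αi αj i j := by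
    have m1 := mm αi (wA G αj j)
    have m2 := mm αj (wA G αi i)
    unfold wA at m1 m2
    unfold ConstA wA
    linarith
  have c1 := aux_core G αi i j hij
  have c2 := aux_core G αj j i hij.symm
  rw [Finset.insert_comm, Finset.inter_comm] at c2
  have ht : tri G j i = tri G i j := by unfold tri; rw [Finset.inter_comm]
  rw [ht] at c2
  set wi := wA G αi i with hwi_def
  set wj := wA G αj j with hwj_def
  suffices hW : 1 - (ConstA G αi αj i j + SlopeA G αi αj i j * (tri G i j : ℝ))
      ≤ W1 G (mGen G αi i) (mGen G αj j) by linarith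
  apply le_csInf
  · refine ⟨_, fun x y => mGen G αi i x * mGen G αj j y,
      ⟨fun x y => mul_nonneg (pi0 x) (pj0 y), fun x => ?_, fun y => ?_⟩, rfl⟩
    · rw [← Finset.mul_sum, pj1, mul_one]
    · rw [← Finset.sum_mul, pi1, one_mul]
  · rintro c ⟨π, hπ, rfl⟩
    have key := aux_dual G hG _ _ (insert i (insert j (G.neighborFinset i ∩ G.neighborFinset j)))
      (wj / (wi + wj)) (by positivity) (by rw [div_le_one (by positivity)]; linarith)
      (by
        intro x hx
        simp only [Finset.mem_insert, Finset.mem_inter, SimpleGraph.mem_neighborFinset, not_or,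
          not_and_or] at hx
        obtain ⟨h1, h2, h3 | h3⟩ := hx
        · left; simp [mGen, dirac, unif, h1, h3]
        · right; simp [mGen, dirac, unif, h2, h3]) pi1 pj1 π hπ
    rw [c1, c2] at key
    have hαi' : αi = 1 - (G.degree i : ℝ) * wi := by linarith
    have hαj' : αj = 1 - (G.degree j : ℝ) * wj := by linarith
    have heq : (wj / (wi + wj) + (1 - wj / (wi + wj)) * (αi + wi * (1 + (tri G i j : ℝ))))
        + ((1 - wj / (wi + wj)) + wj / (wi + wj) * (αj + wj * (1 + (tri G i j : ℝ))))
        = 1 + (ConstA G αi αj i j + SlopeA G αi αj i j * (tri G i j : ℝ)) := by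
      rw [hConst]
      unfold SlopeA
      rw [← hwi_def, ← hwj_def, hS]
      clear_value wi wj
      generalize (G.degree i : ℝ) = di at *
      generalize (G.degree j : ℝ) = dj at *
      rw [hαi', hαj']
      have : wi + wj ≠ 0 := by positivity
      field_simp
      ring
    linarith

end

end Curv
end
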